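/- The monoid T is finite and its cardinality equals Σ_{λ ⊢ n} (n!)² / Π_{i=1}^n (λ^{(i)}!·(i!)^{2λ^{(i)}}), where the sum is over all partitions λ of n and λ^{(i)} denotes the number of parts of λ equal to i (each quotient being an exact natural-number division). (This is the cardinality form of the theorem that T is isomorphic, via σ_i ↦ s_i and τ_i ↦ ϱ_i, to the monoid IT_n, the greatest factorizable inverse submonoid of the dual symmetric inverse monoid.) -/

import Mathlib

/-!
The presentation of `IT_n` (the greatest factorizable inverse submonoid of the dual
symmetric inverse monoid) from Kudryavtseva–Mazorchuk, Section 4.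

Generators: `Sum.inl i` represents `σ_{i+1}` and `Sum.inr i` represents `τ_{i+1}`
for `i : Fin (n-1)` (so the paper's indices `1, …, n-1` correspond to `i.val + 1`).
-/

/-- Generator type: `Sum.inl i` is `σ_{i+1}`, `Sum.inr i` is `τ_{i+1}`. -/
abbrev ITGen (n : ℕ) := Fin (n - 1) ⊕ Fin (n - 1)

/-- The word `σ_{i+1}` in the free monoid. -/
def fσ {n : ℕ} (i : Fin (n - 1)) : FreeMonoid (ITGen n) := FreeMonoid.of (Sum.inl i)

/-- The word `τ_{i+1}` in the free monoid. -/
def fτ {n : ℕ} (i : Fin (n - 1)) : FreeMonoid (ITGen n) := FreeMonoid.of (Sum.inr i)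

/-- The defining relations of the presentation of `IT_n`. -/
inductive ITRel (n : ℕ) : FreeMonoid (ITGen n) → FreeMonoid (ITGen n) → Prop
  | sigma_sq (i) : ITRel n (fσ i * fσ i) 1
  | sigma_comm (i j) (h : 1 < Nat.dist i.1 j.1) : ITRel n (fσ i * fσ j) (fσ j * fσ i)
  | braid (i j) (h : Nat.dist i.1 j.1 = 1) :
      ITRel n (fσ i * fσ j * fσ i) (fσ j * fσ i * fσ j)
  | tau_idem (i) : ITRel n (fτ i * fτ i) (fτ i)
  | tau_comm (i j) (h : i ≠ j) : ITRel n (fτ i * fτ j) (fτ j * fτ i)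
  | tau_sigma (i) : ITRel n (fτ i * fσ i) (fτ i)
  | sigma_tau (i) : ITRel n (fσ i * fτ i) (fτ i)
  | tau_sigma_comm (i j) (h : 1 < Nat.dist i.1 j.1) : ITRel n (fτ i * fσ j) (fσ j * fτ i)
  | sigma_tau_sigma (i j) (h : Nat.dist i.1 j.1 = 1) :
      ITRel n (fσ i * fτ j * fσ i) (fσ j * fτ i * fσ j)
  | tau_sigma_tau (i j) (h : Nat.dist i.1 j.1 = 1) :
      ITRel n (fτ i * fσ j * fτ i) (fτ i * fτ j)

/-- The monoid `T` given by the presentation above. -/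
abbrev ITMonoid (n : ℕ) := PresentedMonoid (ITRel n)

/-- The generator `σ_{i+1}` of `T`. -/
def σI {n : ℕ} (i : Fin (n - 1)) : ITMonoid n := PresentedMonoid.of (ITRel n) (Sum.inl i)

/-- The generator `τ_{i+1}` of `T`. -/
def τI {n : ℕ} (i : Fin (n - 1)) : ITMonoid n := PresentedMonoid.of (ITRel n) (Sum.inr i)

/-- The point `i` of `{1, …, n}` (0-based: `i.val`). -/
def lo {n : ℕ} (i : Fin (n - 1)) : Fin n := ⟨i.1, by have := i.2; omega⟩

/-- The point `i + 1` of `{1, …, n}` (0-based: `i.val + 1`). -/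
def hi {n : ℕ} (i : Fin (n - 1)) : Fin n := ⟨i.1 + 1, by have := i.2; omega⟩

/-- The adjacent transposition `s_{i+1} = (i+1, i+2)` of the symmetric group on `{1, …, n}`. -/
def sPerm {n : ℕ} (i : Fin (n - 1)) : Equiv.Perm (Fin n) := Equiv.swap (lo i) (hi i)

/-!
Write an element of `IT_n` as a pair `(R, g)` of an equivalence relation on `{1, …, n}` and a
permutation taken modulo `R`. The relations of `T` let one define elements `ρ a b` for all pairs
of points by conjugating the `τ_i` with permutations (`T` receives a homomorphism from the
symmetric group because of the Coxeter relations), and `ρ a b` depends on the unordered pair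
only. The `ρ a b` are commuting idempotents, with `ρ a b * ρ b c = ρ a b * ρ a c` and
`ρ a b * (a b) = ρ a b`. Hence the product of all `ρ a b` with `a` and `b` related by `R` depends
only on a generating set of `R`, absorbs every permutation that preserves the classes of `R`, and
`(R, g) ↦ (∏ ρ a b) * g` is a well defined inverse of the evident map `T → IT_n`.

To count `IT_n`, fix the multiset `λ` of class sizes of `R` and label the classes by the parts of
`λ`. There are `n! / ∏ (i!)^{λ^{(i)}}` labellings, each relation `R` arises from
`∏ λ^{(i)}!` of them, and `∏ (i!)^{λ^{(i)}}` permutations agree with a given one modulo `R`.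
-/

/-! ### Monoids satisfying the Coxeter relations of type `A` -/

/-- The Coxeter relations of type `A` for the first `m` terms of a sequence in a monoid; the
other terms are irrelevant, which makes induction on `m` possible. -/
structure IsCoxeterTypeA {M : Type*} [Monoid M] (s : ℕ → M) (m : ℕ) : Prop where
  mul_self : ∀ i < m, s i * s i = 1
  comm : ∀ i j, i + 1 < j → j < m → s i * s j = s j * s i
  braid : ∀ i, i + 1 < m → s i * s (i + 1) * s i = s (i + 1) * s i * s (i + 1)

namespace IsCoxeterTypeA

variable {M : Type*} [Monoid M] {s : ℕ → M} {m : ℕ}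

/-- The product `s m * s (m - 1) * ⋯ * s (m - k + 1)`. For `k ≤ m + 1` these are representatives
of the cosets of `⟨s 0, …, s (m - 1)⟩` in `⟨s 0, …, s m⟩`. -/
def cosetRep (s : ℕ → M) (m : ℕ) : ℕ → M
  | 0 => 1
  | k + 1 => cosetRep s m k * s (m - k)

theorem of_succ (h : IsCoxeterTypeA s (m + 1)) : IsCoxeterTypeA s m where
  mul_self i hi := h.mul_self i (by omega)
  comm i j hij hj := h.comm i j hij (by omega)
  braid i hi := h.braid i (by omega)

theorem cosetRep_mul_of_add_lt (h : IsCoxeterTypeA s (m + 1)) {i : ℕ} :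
    ∀ {k : ℕ}, i + k < m → cosetRep s m k * s i = s i * cosetRep s m k
  | 0, _ => by rw [cosetRep, one_mul, mul_one]
  | k + 1, hik => by
    rw [cosetRep, mul_assoc, ← h.comm i (m - k) (by omega) (by omega), ← mul_assoc,
      h.cosetRep_mul_of_add_lt (by omega), mul_assoc]

theorem cosetRep_mul_succ_of_lt_add (h : IsCoxeterTypeA s (m + 1)) {i : ℕ} (him : i < m) :
    ∀ {k : ℕ}, k ≤ m + 1 → m < i + k → cosetRep s m k * s (i + 1) = s i * cosetRep s m k
  | 0, _, hik => by omega
  | k + 1, hk, hik => by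
    obtain hlt | rfl : m < i + k ∨ m = i + k := by omega
    · rw [cosetRep, mul_assoc, h.comm (m - k) (i + 1) (by omega) (by omega), ← mul_assoc,
        h.cosetRep_mul_succ_of_lt_add him (by omega) hlt, mul_assoc]
    · obtain ⟨l, rfl⟩ : ∃ l, k = l + 1 := ⟨k - 1, by omega⟩
      have hcomm := h.cosetRep_mul_of_add_lt (i := i) (k := l) (by omega)
      rw [cosetRep, cosetRep, show i + (l + 1) - (l + 1) = i by omega,
        show i + (l + 1) - l = i + 1 by omega, mul_assoc, mul_assoc, ← mul_assoc (s (i + 1)),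
        ← h.braid i (by omega), ← mul_assoc, ← mul_assoc, hcomm]
      simp only [mul_assoc]

theorem mul_cosetRep_mul_mem (h : IsCoxeterTypeA s (m + 1)) {a : M}
    (ha : a ∈ Submonoid.closure (s '' Set.Iio m)) {k i : ℕ} (hk : k ≤ m + 1) (hi : i < m + 1) :
    ∃ b ∈ Submonoid.closure (s '' Set.Iio m), ∃ l ≤ m + 1,
      b * cosetRep s m l = a * cosetRep s m k * s i := by
  have mul_gen_mem {j : ℕ} (hj : j < m) : a * s j ∈ Submonoid.closure (s '' Set.Iio m) :=
    mul_mem ha (Submonoid.subset_closure ⟨j, hj, rfl⟩)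
  rcases lt_trichotomy (i + k) m with hlt | heq | hgt
  · exact ⟨a * s i, mul_gen_mem (by omega), k, hk, by
      rw [mul_assoc, mul_assoc, h.cosetRep_mul_of_add_lt hlt]⟩
  · exact ⟨a, ha, k + 1, by omega, by rw [cosetRep, show m - k = i by omega, mul_assoc]⟩
  obtain heq | hgt : i + k = m + 1 ∨ m + 1 < i + k := by omega
  · obtain ⟨l, rfl⟩ : ∃ l, k = l + 1 := ⟨k - 1, by omega⟩
    exact ⟨a, ha, l, by omega, by
      rw [cosetRep, show m - l = i by omega, mul_assoc, mul_assoc, h.mul_self i hi, mul_one]⟩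
  · obtain ⟨l, rfl⟩ : ∃ l, i = l + 1 := ⟨i - 1, by omega⟩
    exact ⟨a * s l, mul_gen_mem (by omega), k, hk, by
      rw [mul_assoc, mul_assoc, h.cosetRep_mul_succ_of_lt_add (by omega) hk (by omega)]⟩

theorem closure_subset_image_cosetRep (h : IsCoxeterTypeA s (m + 1)) :
    (Submonoid.closure (s '' Set.Iio (m + 1)) : Set M) ⊆
      (fun p : M × ℕ ↦ p.1 * cosetRep s m p.2) ''
        ((Submonoid.closure (s '' Set.Iio m) : Set M) ×ˢ Set.Iic (m + 1)) := by
  intro x hx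
  induction hx using Submonoid.closure_induction_right with
  | one => exact ⟨(1, 0), ⟨one_mem _, Nat.zero_le _⟩, mul_one _⟩
  | mul_right x _ y hy ih =>
    obtain ⟨i, hi, rfl⟩ := hy
    obtain ⟨⟨a, k⟩, ⟨ha, hk⟩, rfl⟩ := ih
    obtain ⟨b, hb, l, hl, hbl⟩ := h.mul_cosetRep_mul_mem ha hk hi
    exact ⟨(b, l), ⟨hb, hl⟩, hbl⟩

theorem encard_closure_le :
    ∀ {m : ℕ}, IsCoxeterTypeA s m →
      (Submonoid.closure (s '' Set.Iio m) : Set M).encard ≤ (m + 1).factorial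
  | 0, _ => by simp
  | m + 1, h => by
    calc (Submonoid.closure (s '' Set.Iio (m + 1)) : Set M).encard
      _ ≤ ((Submonoid.closure (s '' Set.Iio m) : Set M) ×ˢ Set.Iic (m + 1)).encard :=
        (Set.encard_le_encard h.closure_subset_image_cosetRep).trans (Set.encard_image_le _ _)
      _ = (Submonoid.closure (s '' Set.Iio m) : Set M).encard * (m + 1 + 1 : ℕ) := by
        rw [Set.encard_prod, ← Finset.coe_Iic, Set.encard_coe_eq_coe_finsetCard, Nat.card_Iic]
      _ ≤ (m + 1).factorial * (m + 1 + 1 : ℕ) := by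
        gcongr
        exact encard_closure_le h.of_succ
      _ = (m + 1 + 1).factorial := by
        rw [Nat.factorial_succ (m + 1), mul_comm, Nat.cast_mul]

end IsCoxeterTypeA

/-! ### The universal property of the symmetric group -/

/-- The graph of the required homomorphism is the submonoid generated by the pairs `(s i, t i)`;
as this submonoid surjects onto `P`, being no larger than `P` makes it a graph. -/
theorem exists_monoidHom_of_encard_closure_le {ι P M : Type*} [Monoid P] [Finite P] [Monoid M]
    {s : ι → P} (hs : Submonoid.closure (Set.range s) = ⊤) {t : ι → M}
    (hcard : (Submonoid.closure (Set.range fun i ↦ (s i, t i)) : Set (P × M)).encard ≤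
      Nat.card P) :
    ∃ φ : P →* M, ∀ i, φ (s i) = t i := by
  set C := Submonoid.closure (Set.range fun i ↦ (s i, t i))
  have mem_C (i : ι) : (s i, t i) ∈ C := Submonoid.subset_closure ⟨i, rfl⟩
  let fst : C →* P := (MonoidHom.fst P M).comp C.subtype
  have fst_surjective : Function.Surjective fst := by
    rw [← MonoidHom.mrange_eq_top, ← top_le_iff, ← hs, Submonoid.closure_le]
    rintro _ ⟨i, rfl⟩
    exact ⟨⟨_, mem_C i⟩, rfl⟩
  have C_finite : (C : Set (P × M)).Finite := Set.finite_of_encard_le_coe hcard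
  have : Finite C := C_finite
  have card_C_le : Nat.card C ≤ Nat.card P := by
    rwa [← C_finite.cast_ncard_eq, Nat.cast_le] at hcard
  have fst_bijective : Function.Bijective fst :=
    (Nat.bijective_iff_surjective_and_card _).2
      ⟨fst_surjective, card_C_le.antisymm (Nat.card_le_card_of_surjective fst fst_surjective)⟩
  let e : C ≃* P := MulEquiv.ofBijective fst fst_bijective
  refine ⟨((MonoidHom.snd P M).comp C.subtype).comp e.symm.toMonoidHom, fun i ↦ ?_⟩
  have : e.symm (s i) = ⟨_, mem_C i⟩ := e.symm_apply_eq.2 rfl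
  simp [this]

section AdjacentTranspositions

variable {n : ℕ}

theorem closure_range_sPerm : Submonoid.closure (Set.range (sPerm (n := n))) = ⊤ := by
  cases n with
  | zero => exact Subsingleton.elim _ _
  | succ k => exact Equiv.Perm.mclosure_swap_castSucc_succ k

theorem sPerm_mul_self (i : Fin (n - 1)) : sPerm i * sPerm i = 1 := Equiv.swap_mul_self _ _

theorem sPerm_comm {i j : Fin (n - 1)} (h : 1 < Nat.dist i.1 j.1) :
    sPerm i * sPerm j = sPerm j * sPerm i := by
  refine (Equiv.Perm.disjoint_swap_swap ?_).commute
  simp only [lo, hi, List.nodup_cons, List.mem_cons, Fin.mk.injEq, List.not_mem_nil, or_false,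
    not_false_eq_true, List.nodup_nil, and_true]
  simp only [Nat.dist] at h
  omega

theorem exists_adjacent_pairs_of_dist_eq_one {i j : Fin (n - 1)} (h : Nat.dist i.1 j.1 = 1) :
    ∃ a b c, a ≠ b ∧ a ≠ c ∧ b ≠ c ∧ s(lo i, hi i) = s(a, b) ∧ s(lo j, hi j) = s(b, c) := by
  simp only [Nat.dist] at h
  obtain h | h : i.1 + 1 = j.1 ∨ j.1 + 1 = i.1 := by omega
  · have hlo : lo j = hi i := by simp only [lo, hi, h]
    refine ⟨lo i, hi i, hi j, ?_, ?_, ?_, rfl, by rw [hlo]⟩ <;>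
      simp only [lo, hi, ne_eq, Fin.mk.injEq] <;> omega
  · have hlo : lo i = hi j := by simp only [lo, hi, h]
    refine ⟨hi i, hi j, lo j, ?_, ?_, ?_, by rw [hlo, Sym2.eq_swap], Sym2.eq_swap⟩ <;>
      simp only [lo, hi, ne_eq, Fin.mk.injEq] <;> omega

theorem sPerm_eq_swap {i : Fin (n - 1)} {a b : Fin n} (h : s(lo i, hi i) = s(a, b)) :
    sPerm i = Equiv.swap a b := by
  obtain ⟨rfl, rfl⟩ | ⟨rfl, rfl⟩ := Sym2.eq_iff.1 h
  · rfl
  · exact Equiv.swap_comm _ _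

theorem sPerm_braid {i j : Fin (n - 1)} (h : Nat.dist i.1 j.1 = 1) :
    sPerm i * sPerm j * sPerm i = sPerm j * sPerm i * sPerm j := by
  obtain ⟨a, b, c, hab, hac, hbc, hi, hj⟩ := exists_adjacent_pairs_of_dist_eq_one h
  rw [sPerm_eq_swap hi, sPerm_eq_swap hj, Equiv.swap_mul_swap_mul_swap hab hac,
    Equiv.swap_comm a b, Equiv.swap_comm b c, Equiv.swap_mul_swap_mul_swap hbc.symm hac.symm,
    Equiv.swap_comm]

theorem encard_closure_range_le_factorial {M : Type*} [Monoid M] {s : Fin (n - 1) → M}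
    (mul_self : ∀ i, s i * s i = 1)
    (comm : ∀ i j : Fin (n - 1), 1 < Nat.dist i.1 j.1 → s i * s j = s j * s i)
    (braid : ∀ i j : Fin (n - 1), Nat.dist i.1 j.1 = 1 → s i * s j * s i = s j * s i * s j) :
    (Submonoid.closure (Set.range s) : Set M).encard ≤ n.factorial := by
  obtain rfl | hn := n.eq_zero_or_pos
  · have : IsEmpty (Fin (0 - 1)) := inferInstanceAs (IsEmpty (Fin 0))
    simp [Set.range_eq_empty]
  let s' : ℕ → M := fun i ↦ if h : i < n - 1 then s ⟨i, h⟩ else 1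
  have s'_eq {i : ℕ} (h : i < n - 1) : s' i = s ⟨i, h⟩ := dif_pos h
  have hs' : IsCoxeterTypeA s' (n - 1) :=
    { mul_self i hi := by rw [s'_eq hi, mul_self]
      comm i j hij hj := by
        rw [s'_eq hj, s'_eq (by omega), comm _ _ (by simp only [Nat.dist]; omega)]
      braid i hi := by rw [s'_eq hi, s'_eq (by omega), braid _ _ (by simp [Nat.dist])] }
  have range_subset : Set.range s ⊆ s' '' Set.Iio (n - 1) := by
    rintro _ ⟨i, rfl⟩
    exact ⟨i, i.2, s'_eq i.2⟩
  calc (Submonoid.closure (Set.range s) : Set M).encard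
    _ ≤ (Submonoid.closure (s' '' Set.Iio (n - 1)) : Set M).encard :=
      Set.encard_le_encard (Submonoid.closure_mono range_subset)
    _ ≤ (n - 1 + 1).factorial := hs'.encard_closure_le
    _ = n.factorial := by rw [Nat.sub_add_cancel hn]

theorem exists_monoidHom_sPerm {M : Type*} [Monoid M] {s : Fin (n - 1) → M}
    (mul_self : ∀ i, s i * s i = 1)
    (comm : ∀ i j : Fin (n - 1), 1 < Nat.dist i.1 j.1 → s i * s j = s j * s i)
    (braid : ∀ i j : Fin (n - 1), Nat.dist i.1 j.1 = 1 → s i * s j * s i = s j * s i * s j) :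
    ∃ φ : Equiv.Perm (Fin n) →* M, ∀ i, φ (sPerm i) = s i := by
  refine exists_monoidHom_of_encard_closure_le closure_range_sPerm ?_
  rw [Nat.card_perm, Nat.card_fin]
  refine encard_closure_range_le_factorial (fun i ↦ ?_) (fun i j h ↦ ?_) (fun i j h ↦ ?_)
  · exact Prod.ext (sPerm_mul_self i) (mul_self i)
  · exact Prod.ext (sPerm_comm h) (comm i j h)
  · exact Prod.ext (sPerm_braid h) (braid i j h)

end AdjacentTranspositions

/-! ### Equivalence relations and permutations -/

section Setoid

open Equiv

variable {α : Type*}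

/-- The equivalence relation generated by the single pair `(a, b)`. -/
def pairSetoid (a b : α) : Setoid α := sInf {S | S a b}

theorem pairSetoid_le_iff {a b : α} {S : Setoid α} : pairSetoid a b ≤ S ↔ S a b :=
  ⟨fun h ↦ h fun _ hS ↦ hS, fun h ↦ sInf_le h⟩

theorem pairSetoid_rel (a b : α) : pairSetoid a b a b := pairSetoid_le_iff.1 le_rfl

theorem pairSetoid_self (a : α) : pairSetoid a a = ⊥ :=
  le_bot_iff.1 (pairSetoid_le_iff.2 rfl)

theorem pairSetoid_comm (a b : α) : pairSetoid a b = pairSetoid b a :=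
  eq_of_forall_ge_iff fun S ↦ by
    rw [pairSetoid_le_iff, pairSetoid_le_iff]
    exact ⟨Setoid.symm' S, Setoid.symm' S⟩

theorem finset_sup_pairSetoid {R : Setoid α} {s : Finset (α × α)}
    (hs : ∀ p : α × α, p ∈ s ↔ R p.1 p.2) : (s.sup fun p ↦ pairSetoid p.1 p.2) = R := by
  refine le_antisymm (Finset.sup_le fun p hp ↦ pairSetoid_le_iff.2 ((hs p).1 hp)) ?_
  intro a b hab
  exact pairSetoid_le_iff.1
    (Finset.le_sup (f := fun p : α × α ↦ pairSetoid p.1 p.2) ((hs (a, b)).2 hab))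

/-- The action of a permutation on equivalence relations: `g a` and `g b` are related by
`permuteSetoid g R` whenever `a` and `b` are related by `R`. -/
def permuteSetoid (g : Perm α) : Setoid α ≃o Setoid α :=
  Equiv.toOrderIso
    { toFun := fun R ↦ R.comap ⇑g⁻¹
      invFun := fun R ↦ R.comap ⇑g
      left_inv := fun R ↦ by ext; simp [Setoid.comap_rel]
      right_inv := fun R ↦ by ext; simp [Setoid.comap_rel] }
    (fun _ _ h _ _ hab ↦ h hab) (fun _ _ h _ _ hab ↦ h hab)

theorem permuteSetoid_apply (g : Perm α) (R : Setoid α) (a b : α) :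
    permuteSetoid g R a b ↔ R (g⁻¹ a) (g⁻¹ b) := Iff.rfl

theorem permuteSetoid_apply_apply (g : Perm α) (R : Setoid α) (a b : α) :
    permuteSetoid g R (g a) (g b) ↔ R a b := by
  simp [permuteSetoid_apply]

theorem permuteSetoid_one (R : Setoid α) : permuteSetoid 1 R = R := rfl

theorem permuteSetoid_mul (g h : Perm α) (R : Setoid α) :
    permuteSetoid (g * h) R = permuteSetoid g (permuteSetoid h R) := rfl

theorem permuteSetoid_le_iff {g : Perm α} {R S : Setoid α} :
    permuteSetoid g R ≤ S ↔ ∀ a b, R a b → S (g a) (g b) := by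
  refine ⟨fun h a b hab ↦ h ((permuteSetoid_apply_apply g R a b).2 hab), fun h a b hab ↦ ?_⟩
  simpa using h _ _ hab

theorem permuteSetoid_pairSetoid (g : Perm α) (a b : α) :
    permuteSetoid g (pairSetoid a b) = pairSetoid (g a) (g b) := by
  refine le_antisymm ?_ (pairSetoid_le_iff.2 ?_)
  · rw [← OrderIso.le_symm_apply, pairSetoid_le_iff]
    exact pairSetoid_rel (g a) (g b)
  · exact (permuteSetoid_apply_apply g _ a b).2 (pairSetoid_rel a b)

theorem pairSetoid_swap_apply [DecidableEq α] (a b c : α) : pairSetoid a b (swap a b c) c := by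
  rw [swap_apply_def]
  split_ifs with hca hcb
  · rw [hca]
    exact Setoid.symm' _ (pairSetoid_rel a b)
  · rw [hcb]
    exact pairSetoid_rel a b
  · exact Setoid.refl' _ c

theorem mem_of_forall_rel_swap_mem [Finite α] [DecidableEq α] {R : Setoid α}
    {C : Submonoid (Perm α)} (hC : ∀ a b, R a b → swap a b ∈ C) {g : Perm α}
    (hg : ∀ a, R (g a) a) : g ∈ C := by
  let S : Set (Perm α) := {f | ∃ a b, a ≠ b ∧ R a b ∧ f = swap a b}
  have S_isSwap : ∀ f ∈ S, f.IsSwap := by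
    rintro _ ⟨a, b, hab, -, rfl⟩
    exact ⟨a, b, hab, rfl⟩
  have mem_orbit (a : α) : g a ∈ MulAction.orbit (Subgroup.closure S) a := by
    obtain hga | hga := eq_or_ne (g a) a
    · rw [hga]
      exact MulAction.mem_orbit_self a
    · exact ⟨⟨swap (g a) a, Subgroup.subset_closure ⟨g a, a, hga, hg a, rfl⟩⟩,
        swap_apply_right _ _⟩
  have mem_closure : g ∈ (Subgroup.closure S).toSubmonoid :=
    (mem_closure_isSwap S_isSwap).2 ⟨Set.toFinite _, mem_orbit⟩
  rw [Subgroup.closure_toSubmonoid_of_finite] at mem_closure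
  refine Submonoid.closure_le.2 ?_ mem_closure
  rintro _ ⟨a, b, -, hab, rfl⟩
  exact hC a b hab

end Setoid

/-! ### Uniform block permutations -/

/-- Two pairs are identified when they have the same equivalence relation `R` and the
permutations agree modulo `R`. -/
def uniformBlockSetoid (α : Type*) : Setoid (Setoid α × Equiv.Perm α) where
  r p q := p.1 = q.1 ∧ ∀ a, p.1 (p.2 a) (q.2 a)
  iseqv :=
    { refl := fun _ ↦ ⟨rfl, fun _ ↦ Setoid.refl' _ _⟩
      symm := fun ⟨hR, h⟩ ↦ ⟨hR.symm, fun a ↦ hR ▸ Setoid.symm' _ (h a)⟩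
      trans := fun ⟨hR, h⟩ ⟨hS, h'⟩ ↦
        ⟨hR.trans hS, fun a ↦ Setoid.trans' _ (h a) (hR ▸ h' a)⟩ }

/-- The uniform block permutations of `α`; for `α = {1, …, n}` this is the monoid `IT_n`.
The class of `(R, g)` stands for the partition of two disjoint copies of `α` whose blocks consist
of a class `C` of `R` in the first copy and of `g⁻¹ C` in the second. -/
def UniformBlockPerm (α : Type*) := Quotient (uniformBlockSetoid α)

namespace UniformBlockPerm

open Equiv

variable {α : Type*}

/-- The uniform block permutation represented by `(R, g)`. -/
def mk (R : Setoid α) (g : Perm α) : UniformBlockPerm α :=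
  Quotient.mk (uniformBlockSetoid α) (R, g)

theorem mk_eq_mk_iff {R S : Setoid α} {g h : Perm α} :
    mk R g = mk S h ↔ R = S ∧ ∀ a, R (g a) (h a) := Quotient.eq

theorem ind {P : UniformBlockPerm α → Prop} (h : ∀ R g, P (mk R g)) (x : UniformBlockPerm α) :
    P x := Quotient.ind (fun p ↦ h p.1 p.2) x

theorem sup_permuteSetoid_le {R S : Setoid α} {g g' : Perm α} (h : ∀ a, R (g a) (g' a)) :
    R ⊔ permuteSetoid g S ≤ R ⊔ permuteSetoid g' S := by
  refine sup_le le_sup_left (permuteSetoid_le_iff.2 fun a b hab ↦ ?_)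
  have hR : R ≤ R ⊔ permuteSetoid g' S := le_sup_left
  have hS : permuteSetoid g' S ≤ R ⊔ permuteSetoid g' S := le_sup_right
  exact Setoid.trans' _ (hR (h a)) (Setoid.trans' _
    (hS ((permuteSetoid_apply_apply g' S a b).2 hab)) (hR (Setoid.symm' _ (h b))))

instance : Mul (UniformBlockPerm α) where
  mul := Quotient.map₂ (fun p q ↦ (p.1 ⊔ permuteSetoid p.2 q.1, p.2 * q.2)) (by
    rintro ⟨R, g⟩ ⟨_, g'⟩ ⟨rfl, hg⟩ ⟨S, h⟩ ⟨_, h'⟩ ⟨rfl, hh⟩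
    refine ⟨le_antisymm (sup_permuteSetoid_le hg)
      (sup_permuteSetoid_le fun a ↦ Setoid.symm' R (hg a)), fun a ↦ ?_⟩
    have hR : R ≤ R ⊔ permuteSetoid g S := le_sup_left
    have hS : permuteSetoid g S ≤ R ⊔ permuteSetoid g S := le_sup_right
    exact Setoid.trans' _ (hS ((permuteSetoid_apply_apply g S _ _).2 (hh a))) (hR (hg (h' a))))

theorem mk_mul_mk (R S : Setoid α) (g h : Perm α) :
    mk R g * mk S h = mk (R ⊔ permuteSetoid g S) (g * h) := rfl

instance : Monoid (UniformBlockPerm α) where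
  one := mk ⊥ 1
  one_mul := ind fun R g ↦ by
    change mk ⊥ 1 * mk R g = _
    rw [mk_mul_mk, permuteSetoid_one, bot_sup_eq, one_mul]
  mul_one := ind fun R g ↦ by
    change mk R g * mk ⊥ 1 = _
    rw [mk_mul_mk, map_bot, sup_bot_eq, mul_one]
  mul_assoc := ind fun R g ↦ ind fun S h ↦ ind fun U k ↦ by
    simp only [mk_mul_mk, map_sup, permuteSetoid_mul, sup_assoc, mul_assoc]

theorem one_def : (1 : UniformBlockPerm α) = mk ⊥ 1 := rfl

/-- The embedding of the permutations as the uniform block permutations with singleton blocks. -/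
def perm : Perm α →* UniformBlockPerm α where
  toFun g := mk ⊥ g
  map_one' := rfl
  map_mul' g h := by rw [mk_mul_mk, map_bot, sup_bot_eq]

theorem perm_apply (g : Perm α) : perm g = mk ⊥ g := rfl

/-- The idempotent obtained from the identity by merging the blocks of `a` and `b`. -/
def join (a b : α) : UniformBlockPerm α := mk (pairSetoid a b) 1

theorem join_def (a b : α) : join a b = mk (pairSetoid a b) 1 := rfl

instance [Finite α] : Finite (UniformBlockPerm α) := by
  have : Finite (Setoid α) :=
    Finite.of_injective (fun R : Setoid α ↦ ⇑R) fun _ _ h ↦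
      Setoid.ext fun a b ↦ iff_of_eq (congrFun₂ h a b)
  exact Quotient.finite _

theorem mem_of_perm_mem_of_join_mem {N : Submonoid (UniformBlockPerm α)} [Finite α]
    (hperm : ∀ g, perm g ∈ N) (hjoin : ∀ a b, join a b ∈ N) (x : UniformBlockPerm α) : x ∈ N := by
  have mk_sup_mem (s : Finset (α × α)) : mk (s.sup fun p ↦ pairSetoid p.1 p.2) 1 ∈ N := by
    classical
    induction s using Finset.induction_on with
    | empty => exact N.one_mem
    | insert p s _ ih =>
      rw [Finset.sup_insert]
      exact N.mul_mem (hjoin p.1 p.2) ih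
  induction x using ind with | h R g
  classical
  have := Fintype.ofFinite α
  have hmk : mk R g = mk R 1 * perm g := by
    rw [perm_apply, mk_mul_mk, map_bot, sup_bot_eq, one_mul]
  rw [hmk, ← finset_sup_pairSetoid (R := R) (s := {p | R p.1 p.2}) (by simp)]
  exact N.mul_mem (mk_sup_mem _) (hperm g)

end UniformBlockPerm

/-! ### Join systems -/

/-- The structure that joins and permutations of a set induce on a monoid: a representation
`perm` of the symmetric group, and commuting idempotents `join a b` permuted by it, absorbing
the transposition of `a` and `b`. -/
structure JoinSystem (α M : Type*) [DecidableEq α] [Monoid M] where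
  perm : Equiv.Perm α →* M
  join : α → α → M
  join_self : ∀ a, join a a = 1
  join_symm : ∀ a b, join a b = join b a
  perm_mul_join : ∀ g a b, perm g * join a b = join (g a) (g b) * perm g
  join_idem : ∀ a b, join a b * join a b = join a b
  join_mul_swap : ∀ a b, join a b * perm (Equiv.swap a b) = join a b
  join_commute : ∀ a b c d, Commute (join a b) (join c d)

namespace JoinSystem

open Equiv

variable {α M : Type*} [DecidableEq α] [Monoid M] (J : JoinSystem α M)

theorem swap_mul_join (a b : α) : J.perm (swap a b) * J.join a b = J.join a b := by
  rw [J.perm_mul_join, swap_apply_left, swap_apply_right, swap_comm, J.join_mul_swap, J.join_symm]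

theorem join_mul_join_congr (a b c : α) :
    J.join a b * J.join a c = J.join a b * J.join b c := by
  obtain rfl | hca := eq_or_ne c a
  · rw [J.join_self, mul_one, J.join_symm b, J.join_idem]
  obtain rfl | hcb := eq_or_ne c b
  · rw [J.join_self, mul_one, J.join_idem]
  calc J.join a b * J.join a c
    _ = J.join a b * (J.perm (swap a b) * J.join a c) := by rw [← mul_assoc, J.join_mul_swap]
    _ = J.join b c * (J.join a b * J.perm (swap a b)) := by
      rw [J.perm_mul_join, swap_apply_left, swap_apply_of_ne_of_ne hca hcb, ← mul_assoc,
        (J.join_commute a b b c).eq, mul_assoc]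
    _ = J.join a b * J.join b c := by rw [J.join_mul_swap, (J.join_commute a b b c).eq]

theorem join_mul_swap_mul_join {a b c : α} (hab : a ≠ b) (hac : a ≠ c) :
    J.join a b * J.perm (swap b c) * J.join a b = J.join a b * J.join b c := by
  rw [mul_assoc, J.perm_mul_join, swap_apply_of_ne_of_ne hab hac, swap_apply_left, ← mul_assoc,
    J.join_mul_join_congr, mul_assoc, J.join_mul_swap]

/-- The pairs `(a, b)` such that `x` absorbs `join a b` on the right. -/
def absorbed (x : M) : Setoid α where
  r a b := x * J.join a b = x
  iseqv :=
    { refl := fun a ↦ by rw [J.join_self, mul_one]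
      symm := fun {a b} h ↦ by rwa [J.join_symm]
      trans := fun {a b c} hab hbc ↦ by
        rw [← hab, mul_assoc, J.join_mul_join_congr, ← mul_assoc, hab, hbc] }

theorem absorbed_iff {x : M} {a b : α} : J.absorbed x a b ↔ x * J.join a b = x := Iff.rfl

theorem pairwise_commute_join (s : Set (α × α)) :
    s.Pairwise (Function.onFun Commute fun p ↦ J.join p.1 p.2) :=
  fun _ _ _ _ _ ↦ J.join_commute _ _ _ _

section JoinAll

variable [Finite α]

/-- The product of the joins of all pairs related by `R`. -/
noncomputable def joinAll (R : Setoid α) : M :=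
  (Set.toFinite {p : α × α | R p.1 p.2}).toFinset.noncommProd (fun p ↦ J.join p.1 p.2)
    (J.pairwise_commute_join _)

theorem joinAll_mul_join {R : Setoid α} {a b : α} (hab : R a b) :
    J.joinAll R * J.join a b = J.joinAll R := by
  have hmem : (a, b) ∈ (Set.toFinite {p : α × α | R p.1 p.2}).toFinset := by simpa using hab
  rw [joinAll, ← Finset.noncommProd_erase_mul _ hmem _ (J.pairwise_commute_join _), mul_assoc,
    J.join_idem]

theorem mul_joinAll_of_le_absorbed {R : Setoid α} {x : M} (h : R ≤ J.absorbed x) :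
    x * J.joinAll R = x :=
  Finset.noncommProd_induction _ _ _ (fun y ↦ x * y = x)
    (fun y z hy hz ↦ by rw [← mul_assoc, hy, hz]) (mul_one x)
    fun p hp ↦ h (by simpa using hp)

theorem joinAll_mul_of_forall_rel {R : Setoid α} {x : M}
    (h : ∀ a b, R a b → J.join a b * x = x) : J.joinAll R * x = x :=
  Finset.noncommProd_induction _ _ _ (fun y ↦ y * x = x)
    (fun y z hy hz ↦ by rw [mul_assoc, hz, hy]) (one_mul x)
    fun p hp ↦ h _ _ (by simpa using hp)

theorem commute_join_joinAll (a b : α) (R : Setoid α) : Commute (J.join a b) (J.joinAll R) :=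
  Finset.noncommProd_commute _ _ _ _ fun _ _ ↦ J.join_commute _ _ _ _

theorem commute_joinAll (R S : Setoid α) : Commute (J.joinAll R) (J.joinAll S) :=
  Finset.noncommProd_commute _ _ _ _ fun p _ ↦ (J.commute_join_joinAll p.1 p.2 R).symm

theorem joinAll_bot : J.joinAll ⊥ = 1 := by
  simpa using J.mul_joinAll_of_le_absorbed (x := 1) bot_le

theorem joinAll_mul_joinAll_of_le {R S : Setoid α} (h : R ≤ S) :
    J.joinAll S * J.joinAll R = J.joinAll S :=
  J.mul_joinAll_of_le_absorbed fun _ _ hab ↦ J.joinAll_mul_join (h hab)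

theorem joinAll_sup (R S : Setoid α) : J.joinAll (R ⊔ S) = J.joinAll R * J.joinAll S := by
  have hR : R ≤ J.absorbed (J.joinAll R * J.joinAll S) := fun a b hab ↦ by
    rw [absorbed_iff, (J.commute_joinAll R S).eq, mul_assoc, J.joinAll_mul_join hab]
  have hS : S ≤ J.absorbed (J.joinAll R * J.joinAll S) := fun a b hab ↦ by
    rw [absorbed_iff, mul_assoc, J.joinAll_mul_join hab]
  calc J.joinAll (R ⊔ S)
    _ = J.joinAll (R ⊔ S) * (J.joinAll R * J.joinAll S) := by
      rw [← mul_assoc, J.joinAll_mul_joinAll_of_le le_sup_left,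
        J.joinAll_mul_joinAll_of_le le_sup_right]
    _ = J.joinAll R * J.joinAll S * J.joinAll (R ⊔ S) :=
      (J.commute_joinAll _ _).mul_right (J.commute_joinAll _ _)
    _ = J.joinAll R * J.joinAll S := J.mul_joinAll_of_le_absorbed (sup_le hR hS)

theorem joinAll_pairSetoid (a b : α) : J.joinAll (pairSetoid a b) = J.join a b := by
  rw [← J.joinAll_mul_join (pairSetoid_rel a b), ← (J.commute_join_joinAll a b _).eq]
  exact J.mul_joinAll_of_le_absorbed (pairSetoid_le_iff.2 (J.join_idem a b))

theorem perm_mul_joinAll (g : Perm α) (R : Setoid α) :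
    J.perm g * J.joinAll R = J.joinAll (permuteSetoid g R) * J.perm g := by
  have absorb_left : J.joinAll (permuteSetoid g R) * (J.perm g * J.joinAll R) =
      J.perm g * J.joinAll R :=
    J.joinAll_mul_of_forall_rel fun a b hab ↦ by
      obtain ⟨a, rfl⟩ := g.surjective a
      obtain ⟨b, rfl⟩ := g.surjective b
      rw [permuteSetoid_apply_apply] at hab
      rw [← mul_assoc, ← J.perm_mul_join, mul_assoc, (J.commute_join_joinAll a b R).eq,
        J.joinAll_mul_join hab]
  have absorb_right : J.joinAll (permuteSetoid g R) * J.perm g * J.joinAll R =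
      J.joinAll (permuteSetoid g R) * J.perm g :=
    J.mul_joinAll_of_le_absorbed fun a b hab ↦ by
      rw [absorbed_iff, mul_assoc, J.perm_mul_join, ← mul_assoc,
        J.joinAll_mul_join ((permuteSetoid_apply_apply g R a b).2 hab)]
  rw [← absorb_left, ← mul_assoc, absorb_right]

theorem joinAll_mul_perm_of_forall_rel {R : Setoid α} {g : Perm α} (hg : ∀ a, R (g a) a) :
    J.joinAll R * J.perm g = J.joinAll R := by
  let C : Submonoid (Perm α) :=
    { carrier := {g | J.joinAll R * J.perm g = J.joinAll R}
      one_mem' := by simp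
      mul_mem' := fun {g h} hg hh ↦ by
        rw [Set.mem_ofPred_eq] at hg hh ⊢
        rw [map_mul, ← mul_assoc, hg, hh] }
  refine mem_of_forall_rel_swap_mem (C := C) (fun a b hab ↦ ?_) hg
  change J.joinAll R * J.perm (swap a b) = J.joinAll R
  rw [← J.joinAll_mul_join hab, mul_assoc, J.join_mul_swap]

theorem joinAll_mul_perm_congr {R : Setoid α} {g h : Perm α} (hgh : ∀ a, R (g a) (h a)) :
    J.joinAll R * J.perm g = J.joinAll R * J.perm h := by
  have hrel (a : α) : R ((g * h⁻¹) a) a := by simpa using hgh (h⁻¹ a)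
  calc J.joinAll R * J.perm g
    _ = J.joinAll R * J.perm (g * h⁻¹) * J.perm h := by
      rw [mul_assoc, ← map_mul, inv_mul_cancel_right]
    _ = J.joinAll R * J.perm h := by rw [J.joinAll_mul_perm_of_forall_rel hrel]

/-- The homomorphism carrying the join system of the uniform block permutations to `J`, which
makes the former the universal join system on `α`. -/
noncomputable def lift : UniformBlockPerm α →* M where
  toFun := Quotient.lift (fun p ↦ J.joinAll p.1 * J.perm p.2) (by
    rintro ⟨R, g⟩ ⟨_, h⟩ ⟨rfl, hgh⟩
    exact J.joinAll_mul_perm_congr hgh)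
  map_one' := show J.joinAll ⊥ * J.perm 1 = 1 by rw [J.joinAll_bot, map_one, mul_one]
  map_mul' := UniformBlockPerm.ind fun R g ↦ UniformBlockPerm.ind fun S h ↦
    show J.joinAll (R ⊔ permuteSetoid g S) * J.perm (g * h) =
        J.joinAll R * J.perm g * (J.joinAll S * J.perm h) by
      rw [J.joinAll_sup, map_mul, mul_assoc, ← mul_assoc (J.joinAll _) (J.perm g),
        ← J.perm_mul_joinAll]
      simp only [mul_assoc]

theorem lift_mk (R : Setoid α) (g : Perm α) :
    J.lift (UniformBlockPerm.mk R g) = J.joinAll R * J.perm g := rfl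

theorem lift_perm (g : Perm α) : J.lift (UniformBlockPerm.perm g) = J.perm g := by
  rw [UniformBlockPerm.perm_apply, lift_mk, joinAll_bot, one_mul]

theorem lift_join (a b : α) : J.lift (UniformBlockPerm.join a b) = J.join a b := by
  rw [UniformBlockPerm.join_def, lift_mk, joinAll_pairSetoid, map_one, mul_one]

end JoinAll

end JoinSystem

/-- The join system of the uniform block permutations themselves. -/
def UniformBlockPerm.joinSystem (α : Type*) [DecidableEq α] :
    JoinSystem α (UniformBlockPerm α) where
  perm := perm
  join := join
  join_self a := by rw [join_def, pairSetoid_self, one_def]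
  join_symm a b := by rw [join_def, join_def, pairSetoid_comm]
  perm_mul_join g a b := by
    simp only [perm_apply, join_def, mk_mul_mk, permuteSetoid_pairSetoid, bot_sup_eq, map_bot,
      sup_bot_eq, mul_one, one_mul]
  join_idem a b := by rw [join_def, mk_mul_mk, permuteSetoid_one, sup_idem, mul_one]
  join_mul_swap a b := by
    rw [join_def, perm_apply, mk_mul_mk, map_bot, sup_bot_eq, one_mul, mk_eq_mk_iff]
    exact ⟨rfl, pairSetoid_swap_apply a b⟩
  join_commute a b c d := by
    rw [commute_iff_eq, join_def, join_def, mk_mul_mk, mk_mul_mk, permuteSetoid_one,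
      permuteSetoid_one, sup_comm]

/-! ### The monoid `T` and its join system -/

section Transport

variable {M : Type*} [Monoid M]

theorem semiconjBy_right_unique {u x y y' : M} (hu : IsUnit u) (h : SemiconjBy u x y)
    (h' : SemiconjBy u x y') : y = y' :=
  hu.mul_right_cancel (h.eq.symm.trans h'.eq)

theorem commute_of_semiconjBy {u x x' y y' : M} (hu : IsUnit u) (hxy : Commute x y)
    (h : SemiconjBy u x x') (h' : SemiconjBy u y y') : Commute x' y' :=
  semiconjBy_right_unique hu (h.mul_right h') (hxy.eq ▸ h'.mul_right h)

theorem exists_equivariant_extension {G X : Type*} [Group G] [MulAction G X] (φ : G →* M)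
    (x₀ : X) {m : M} (hm : ∀ g ∈ MulAction.stabilizer G x₀, Commute (φ g) m) :
    ∃ t : X → M, t x₀ = m ∧ (∀ x ∉ MulAction.orbit G x₀, t x = 1) ∧
      ∀ g x, SemiconjBy (φ g) (t x) (t (g • x)) := by
  classical
  have exists_smul_eq (x : X) (hx : x ∈ MulAction.orbit G x₀) : ∃ g : G, g • x₀ = x := hx
  choose! γ hγ using exists_smul_eq
  let t : X → M := fun x ↦
    if x ∈ MulAction.orbit G x₀ then φ (γ x) * m * φ (γ x)⁻¹ else 1
  have t_smul (g : G) : SemiconjBy (φ g) m (t (g • x₀)) := by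
    have hmem : g • x₀ ∈ MulAction.orbit G x₀ := MulAction.mem_orbit x₀ g
    have hstab : (γ (g • x₀))⁻¹ * g ∈ MulAction.stabilizer G x₀ := by
      rw [MulAction.mem_stabilizer_iff, mul_smul, inv_smul_eq_iff, hγ _ hmem]
    have hconj : SemiconjBy (φ (γ (g • x₀))) m (t (g • x₀)) := by
      simp only [t, if_pos hmem, SemiconjBy, mul_assoc, ← map_mul, inv_mul_cancel, map_one, mul_one]
    simpa only [← map_mul, mul_inv_cancel_left] using hconj.mul_left (hm _ hstab)
  refine ⟨t, by simpa [SemiconjBy] using (t_smul 1).symm, fun x hx ↦ if_neg hx, fun g x ↦ ?_⟩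
  by_cases hx : x ∈ MulAction.orbit G x₀
  · obtain ⟨h, rfl⟩ := hx
    have hgh : SemiconjBy (φ g * φ h) m (t (g • h • x₀)) := by
      rw [← map_mul, ← mul_smul]
      exact t_smul (g * h)
    refine (Group.isUnit h).map φ |>.mul_right_cancel ?_
    change φ g * t (h • x₀) * φ h = t (g • h • x₀) * φ g * φ h
    rw [mul_assoc, ← (t_smul h).eq, ← mul_assoc, hgh.eq, mul_assoc]
  · have hgx : g • x ∉ MulAction.orbit G x₀ := by
      rwa [← MulAction.orbit_eq_iff, MulAction.orbit_smul, MulAction.orbit_eq_iff]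
    simp only [t, if_neg hx, if_neg hgx, SemiconjBy.one_right]

end Transport

theorem exists_perm_apply_eq_getElem {n : ℕ} {l : List (Fin n)} (hl : l.Nodup) :
    ∃ g : Equiv.Perm (Fin n), ∀ (i : ℕ) (h : i < l.length) (hin : i < n), g ⟨i, hin⟩ = l[i] := by
  have hle : l.length ≤ n := by simpa using hl.length_le_card
  obtain ⟨g, hg⟩ := Equiv.Perm.exists_extending_pair (Fin.castLE hle) l.get
    (Fin.castLE_injective hle) (List.nodup_iff_injective_get.1 hl)
  exact ⟨g, fun i h _ ↦ hg ⟨i, h⟩⟩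

theorem swap_mem_of_forall_sPerm_mem {n k : ℕ} {C : Submonoid (Equiv.Perm (Fin n))}
    (hC : ∀ i : Fin (n - 1), k ≤ i.1 → sPerm i ∈ C) {a b : Fin n} (ha : k ≤ a.1) (hb : k ≤ b.1) :
    Equiv.swap a b ∈ C := by
  wlog hab : a ≤ b generalizing a b
  · rw [Equiv.swap_comm]
    exact this hb ha (le_of_not_ge hab)
  obtain ⟨b, hbn⟩ := b
  clear hb
  replace hab : a.1 ≤ b := hab
  induction b, hab using Nat.le_induction with
  | base =>
    rw [Equiv.swap_self]
    exact C.one_mem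
  | succ b hab ih =>
    have hstep : Equiv.swap (⟨b, by omega⟩ : Fin n) ⟨b + 1, hbn⟩ ∈ C :=
      hC ⟨b, by omega⟩ (ha.trans hab)
    exact SubmonoidClass.swap_mem_trans C (ih (by omega)) hstep

namespace ITMonoid

open Equiv

variable {n : ℕ}

theorem σI_mul_self (i : Fin (n - 1)) : σI i * σI i = 1 :=
  PresentedMonoid.mk_eq_mk_of_rel (ITRel.sigma_sq i)

theorem τI_mul_self (i : Fin (n - 1)) : τI i * τI i = τI i :=
  PresentedMonoid.mk_eq_mk_of_rel (ITRel.tau_idem i)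

theorem τI_mul_σI (i : Fin (n - 1)) : τI i * σI i = τI i :=
  PresentedMonoid.mk_eq_mk_of_rel (ITRel.tau_sigma i)

theorem σI_mul_τI (i : Fin (n - 1)) : σI i * τI i = τI i :=
  PresentedMonoid.mk_eq_mk_of_rel (ITRel.sigma_tau i)

theorem commute_τI (i j : Fin (n - 1)) : Commute (τI i) (τI j) := by
  obtain rfl | hij := eq_or_ne i j
  · exact Commute.refl _
  · exact PresentedMonoid.mk_eq_mk_of_rel (ITRel.tau_comm i j hij)

theorem commute_σI_τI {i j : Fin (n - 1)} (h : 1 < Nat.dist i.1 j.1) : Commute (σI j) (τI i) :=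
  (PresentedMonoid.mk_eq_mk_of_rel (ITRel.tau_sigma_comm i j h)).symm

theorem semiconjBy_σI_mul_σI_τI {i j : Fin (n - 1)} (h : Nat.dist i.1 j.1 = 1) :
    SemiconjBy (σI i * σI j) (τI i) (τI j) := by
  have hrel : σI i * τI j * σI i = σI j * τI i * σI j :=
    PresentedMonoid.mk_eq_mk_of_rel (ITRel.sigma_tau_sigma i j h)
  calc σI i * σI j * τI i
    _ = σI i * (σI j * τI i * σI j) * σI j := by simp only [mul_assoc, σI_mul_self, mul_one]
    _ = σI i * σI i * τI j * (σI i * σI j) := by rw [← hrel]; simp only [mul_assoc]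
    _ = τI j * (σI i * σI j) := by rw [σI_mul_self, one_mul]

theorem exists_permHom (n : ℕ) : ∃ φ : Perm (Fin n) →* ITMonoid n, ∀ i, φ (sPerm i) = σI i :=
  exists_monoidHom_sPerm σI_mul_self
    (fun i j h ↦ PresentedMonoid.mk_eq_mk_of_rel (ITRel.sigma_comm i j h))
    (fun i j h ↦ PresentedMonoid.mk_eq_mk_of_rel (ITRel.braid i j h))

/-- The homomorphism from the symmetric group to `T` sending `s_i` to `σ_i`. -/
noncomputable def permHom (n : ℕ) : Perm (Fin n) →* ITMonoid n := (exists_permHom n).choose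

theorem permHom_sPerm (i : Fin (n - 1)) : permHom n (sPerm i) = σI i :=
  (exists_permHom n).choose_spec i

theorem isUnit_permHom (g : Perm (Fin n)) : IsUnit (permHom n g) := (Group.isUnit g).map (permHom n)

theorem commute_permHom_τI_zero (h : 0 < n - 1) {g : Perm (Fin n)}
    (hlo : g (lo ⟨0, h⟩) = lo ⟨0, h⟩) (hhi : g (hi ⟨0, h⟩) = hi ⟨0, h⟩) :
    Commute (permHom n g) (τI ⟨0, h⟩) := by
  let C : Submonoid (Perm (Fin n)) := (Submonoid.centralizer {τI ⟨0, h⟩}).comap (permHom n)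
  have mem_C_iff {g : Perm (Fin n)} : g ∈ C ↔ Commute (permHom n g) (τI ⟨0, h⟩) := by
    simp [C, Submonoid.mem_centralizer_iff, commute_iff_eq, eq_comm]
  have sPerm_mem (i : Fin (n - 1)) (hi : 2 ≤ i.1) : sPerm i ∈ C := by
    rw [mem_C_iff, permHom_sPerm]
    exact commute_σI_τI (by simp only [Nat.dist]; omega)
  rw [← mem_C_iff]
  -- `g` preserves the classes `{0}`, `{1}` and `{2, 3, …}` of this relation.
  refine mem_of_forall_rel_swap_mem (R := Setoid.ker fun a : Fin n ↦ min a.1 2)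
    (fun a b hab ↦ ?_) fun a ↦ ?_
  · obtain hab | ⟨ha, hb⟩ : a = b ∨ 2 ≤ a.1 ∧ 2 ≤ b.1 := by
      rw [Setoid.ker_def] at hab
      omega
    · rw [hab, swap_self]
      exact C.one_mem
    · exact swap_mem_of_forall_sPerm_mem sPerm_mem ha hb
  · have hlo' := g.apply_eq_iff_eq (x := a) (y := lo ⟨0, h⟩)
    have hhi' := g.apply_eq_iff_eq (x := a) (y := hi ⟨0, h⟩)
    rw [hlo] at hlo'
    rw [hhi] at hhi'
    simp only [lo, hi, Fin.ext_iff] at hlo' hhi'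
    rw [Setoid.ker_def]
    omega

theorem exists_join (n : ℕ) : ∃ t : Fin n × Fin n → ITMonoid n,
    (∀ h : 0 < n - 1, t (lo ⟨0, h⟩, hi ⟨0, h⟩) = τI ⟨0, h⟩) ∧ (∀ a, t (a, a) = 1) ∧
      ∀ (g : Perm (Fin n)) p, SemiconjBy (permHom n g) (t p) (t (g • p)) := by
  obtain hn | hn := (n - 1).eq_zero_or_pos
  · exact ⟨1, fun h ↦ by omega, fun _ ↦ rfl, fun _ _ ↦ SemiconjBy.one_right _⟩
  obtain ⟨t, ht, ht_one, ht_smul⟩ := exists_equivariant_extension (permHom n)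
    (lo ⟨0, hn⟩, hi ⟨0, hn⟩) (m := τI ⟨0, hn⟩) fun g hg ↦ by
      rw [MulAction.mem_stabilizer_iff, Prod.smul_mk, Prod.mk.injEq] at hg
      exact commute_permHom_τI_zero hn hg.1 hg.2
  refine ⟨t, fun _ ↦ ht, fun a ↦ ht_one _ ?_, ht_smul⟩
  rintro ⟨g, hg⟩
  obtain ⟨hlo, hhi⟩ := Prod.mk.inj hg
  simpa [lo, hi] using g.injective (hlo.trans hhi.symm)

/-- The conjugates of the generators `τ_i` under the symmetric group, indexed by the pair of
points that the corresponding element of `IT_n` merges. -/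
noncomputable def join (a b : Fin n) : ITMonoid n := (exists_join n).choose (a, b)

theorem join_self (a : Fin n) : join a a = 1 := (exists_join n).choose_spec.2.1 a

theorem semiconjBy_permHom_join (g : Perm (Fin n)) (a b : Fin n) :
    SemiconjBy (permHom n g) (join a b) (join (g a) (g b)) :=
  (exists_join n).choose_spec.2.2 g (a, b)

theorem sPerm_mul_sPerm_lo_hi {i j : Fin (n - 1)} (h : i.1 + 1 = j.1) :
    (sPerm i * sPerm j) (lo i) = lo j ∧ (sPerm i * sPerm j) (hi i) = hi j := by
  have hij : hi i = lo j := Fin.ext h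
  simp only [Perm.mul_apply, sPerm, hij]
  constructor
  · rw [swap_apply_of_ne_of_ne (a := lo j), swap_apply_left] <;>
      simp only [lo, hi, ne_eq, Fin.mk.injEq] <;> omega
  · rw [swap_apply_left, swap_apply_of_ne_of_ne] <;>
      simp only [lo, hi, ne_eq, Fin.mk.injEq] <;> omega

theorem join_lo_hi (i : Fin (n - 1)) : join (lo i) (hi i) = τI i := by
  obtain ⟨i, h⟩ := i
  induction i with
  | zero => exact (exists_join n).choose_spec.1 h
  | succ i ih =>
    have hi' : i < n - 1 := by omega
    obtain ⟨hlo, hhi⟩ := sPerm_mul_sPerm_lo_hi (i := ⟨i, hi'⟩) (j := ⟨i + 1, h⟩) rfl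
    have hconj := semiconjBy_permHom_join (sPerm ⟨i, hi'⟩ * sPerm ⟨i + 1, h⟩)
      (lo ⟨i, hi'⟩) (hi ⟨i, hi'⟩)
    rw [hlo, hhi, ih hi'] at hconj
    refine semiconjBy_right_unique (isUnit_permHom _) hconj ?_
    rw [map_mul, permHom_sPerm, permHom_sPerm]
    exact semiconjBy_σI_mul_σI_τI (by simp [Nat.dist])

theorem semiconjBy_permHom_τI {g : Perm (Fin n)} {i : Fin (n - 1)} {a b : Fin n}
    (ha : g (lo i) = a) (hb : g (hi i) = b) : SemiconjBy (permHom n g) (τI i) (join a b) := by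
  rw [← join_lo_hi, ← ha, ← hb]
  exact semiconjBy_permHom_join g _ _

theorem exists_semiconjBy_τI_join {a b : Fin n} (hab : a ≠ b) :
    ∃ (g : Perm (Fin n)) (i : Fin (n - 1)), SemiconjBy (permHom n g) (τI i) (join a b) ∧
      SemiconjBy (permHom n g) (σI i) (permHom n (swap a b)) := by
  obtain ⟨g, hg⟩ := exists_perm_apply_eq_getElem (l := [a, b]) (by simpa using hab)
  have hn : 0 < n - 1 := by omega
  refine ⟨g, ⟨0, hn⟩, semiconjBy_permHom_τI (hg 0 (by simp) _) (hg 1 (by simp) _), ?_⟩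
  rw [← permHom_sPerm]
  refine SemiconjBy.map ?_ (permHom n)
  rw [SemiconjBy, sPerm, mul_swap_eq_swap_mul]
  exact congrArg₂ (fun x y ↦ swap x y * g) (hg 0 (by simp) _) (hg 1 (by simp) _)

theorem join_idem (a b : Fin n) : join a b * join a b = join a b := by
  obtain rfl | hab := eq_or_ne a b
  · rw [join_self, mul_one]
  obtain ⟨g, i, hjoin, -⟩ := exists_semiconjBy_τI_join hab
  refine semiconjBy_right_unique (isUnit_permHom g) (hjoin.mul_right hjoin) ?_
  rwa [τI_mul_self]

theorem join_mul_swap (a b : Fin n) : join a b * permHom n (swap a b) = join a b := by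
  obtain rfl | hab := eq_or_ne a b
  · rw [swap_self, ← Perm.one_def, map_one, mul_one]
  obtain ⟨g, i, hjoin, hswap⟩ := exists_semiconjBy_τI_join hab
  refine semiconjBy_right_unique (isUnit_permHom g) (hjoin.mul_right hswap) ?_
  rwa [τI_mul_σI]

theorem swap_mul_join (a b : Fin n) : permHom n (swap a b) * join a b = join a b := by
  obtain rfl | hab := eq_or_ne a b
  · rw [swap_self, ← Perm.one_def, map_one, one_mul]
  obtain ⟨g, i, hjoin, hswap⟩ := exists_semiconjBy_τI_join hab
  refine semiconjBy_right_unique (isUnit_permHom g) (hswap.mul_right hjoin) ?_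
  rwa [σI_mul_τI]

theorem join_symm (a b : Fin n) : join a b = join b a := by
  have hconj := (semiconjBy_permHom_join (swap a b) a b).eq
  rwa [swap_apply_left, swap_apply_right, swap_mul_join, swap_comm, join_mul_swap] at hconj

theorem commute_join_join_of_shared (a b c : Fin n) : Commute (join a b) (join b c) := by
  obtain rfl | hab := eq_or_ne a b
  · exact join_self a ▸ Commute.one_left _
  obtain rfl | hbc := eq_or_ne b c
  · exact join_self b ▸ Commute.one_right _
  obtain rfl | hac := eq_or_ne a c
  · exact join_symm a b ▸ Commute.refl _
  obtain ⟨g, hg⟩ := exists_perm_apply_eq_getElem (l := [a, b, c]) (by simp [hab, hac, hbc])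
  have hn : 1 < n - 1 := by omega
  exact commute_of_semiconjBy (isUnit_permHom g) (commute_τI ⟨0, by omega⟩ ⟨1, hn⟩)
    (semiconjBy_permHom_τI (hg 0 (by simp) _) (hg 1 (by simp) _))
    (semiconjBy_permHom_τI (hg 1 (by simp) _) (hg 2 (by simp) _))

theorem commute_join_join_of_nodup {a b c d : Fin n} (h : [a, b, c, d].Nodup) :
    Commute (join a b) (join c d) := by
  have hn : 4 ≤ n := by simpa using h.length_le_card
  obtain ⟨g, hg⟩ := exists_perm_apply_eq_getElem h
  exact commute_of_semiconjBy (isUnit_permHom g) (commute_τI ⟨0, by omega⟩ ⟨2, by omega⟩)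
    (semiconjBy_permHom_τI (hg 0 (by simp) _) (hg 1 (by simp) _))
    (semiconjBy_permHom_τI (hg 2 (by simp) _) (hg 3 (by simp) _))

theorem commute_join_join (a b c d : Fin n) : Commute (join a b) (join c d) := by
  obtain rfl | hab := eq_or_ne a b
  · exact join_self a ▸ Commute.one_left _
  obtain rfl | hcd := eq_or_ne c d
  · exact join_self c ▸ Commute.one_right _
  obtain rfl | hac := eq_or_ne a c
  · exact join_symm a b ▸ commute_join_join_of_shared b a d
  obtain rfl | had := eq_or_ne a d
  · exact (commute_join_join_of_shared c a b).symm
  obtain rfl | hbc := eq_or_ne b c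
  · exact commute_join_join_of_shared a b d
  obtain rfl | hbd := eq_or_ne b d
  · exact join_symm c b ▸ commute_join_join_of_shared a b c
  exact commute_join_join_of_nodup (by simp [hab, hac, had, hbc, hbd, hcd])

/-- The join system of `T`, in which `σ_i` is the image of `s_i` and `τ_i` joins `i` and `i + 1`. -/
noncomputable def joinSystem (n : ℕ) : JoinSystem (Fin n) (ITMonoid n) where
  perm := permHom n
  join := join
  join_self := join_self
  join_symm := join_symm
  perm_mul_join g a b := semiconjBy_permHom_join g a b
  join_idem := join_idem
  join_mul_swap := join_mul_swap
  join_commute := commute_join_join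

end ITMonoid

namespace JoinSystem

open Equiv

variable {n : ℕ} {M : Type*} [Monoid M] (J : JoinSystem (Fin n) M)

theorem join_lo_hi_eq {i : Fin (n - 1)} {a b : Fin n} (h : s(lo i, hi i) = s(a, b)) :
    J.join (lo i) (hi i) = J.join a b := by
  obtain ⟨rfl, rfl⟩ | ⟨rfl, rfl⟩ := Sym2.eq_iff.1 h
  · rfl
  · exact J.join_symm _ _

theorem commute_join_sPerm {i j : Fin (n - 1)} (h : 1 < Nat.dist i.1 j.1) :
    Commute (J.join (lo i) (hi i)) (J.perm (sPerm j)) := by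
  have hlo : sPerm j (lo i) = lo i := by
    apply swap_apply_of_ne_of_ne <;>
      (simp only [Nat.dist, lo, hi, ne_eq, Fin.mk.injEq] at h ⊢; omega)
  have hhi : sPerm j (hi i) = hi i := by
    apply swap_apply_of_ne_of_ne <;>
      (simp only [Nat.dist, lo, hi, ne_eq, Fin.mk.injEq] at h ⊢; omega)
  rw [commute_iff_eq, J.perm_mul_join, hlo, hhi]

theorem sPerm_mul_join_mul_sPerm {i j : Fin (n - 1)} (h : Nat.dist i.1 j.1 = 1) :
    J.perm (sPerm i) * J.join (lo j) (hi j) * J.perm (sPerm i) =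
      J.perm (sPerm j) * J.join (lo i) (hi i) * J.perm (sPerm j) := by
  have conj_eq (i : Fin (n - 1)) (a b : Fin n) :
      J.perm (sPerm i) * J.join a b * J.perm (sPerm i) = J.join (sPerm i a) (sPerm i b) := by
    rw [J.perm_mul_join, mul_assoc, ← map_mul, sPerm_mul_self, map_one, mul_one]
  obtain ⟨a, b, c, hab, hac, hbc, hsi, hsj⟩ := exists_adjacent_pairs_of_dist_eq_one h
  rw [J.join_lo_hi_eq hsi, J.join_lo_hi_eq hsj, conj_eq, conj_eq, sPerm_eq_swap hsi,
    sPerm_eq_swap hsj, swap_apply_right, swap_apply_of_ne_of_ne hac.symm hbc.symm,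
    swap_apply_of_ne_of_ne hab hac, swap_apply_left]

theorem join_mul_sPerm_mul_join {i j : Fin (n - 1)} (h : Nat.dist i.1 j.1 = 1) :
    J.join (lo i) (hi i) * J.perm (sPerm j) * J.join (lo i) (hi i) =
      J.join (lo i) (hi i) * J.join (lo j) (hi j) := by
  obtain ⟨a, b, c, hab, hac, -, hsi, hsj⟩ := exists_adjacent_pairs_of_dist_eq_one h
  rw [J.join_lo_hi_eq hsi, J.join_lo_hi_eq hsj, sPerm_eq_swap hsj,
    J.join_mul_swap_mul_join hab hac]

end JoinSystem

/-- The homomorphism from `T` determined by a join system on `{1, …, n}`. -/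
def ITMonoid.lift {n : ℕ} {M : Type*} [Monoid M] (J : JoinSystem (Fin n) M) : ITMonoid n →* M :=
  PresentedMonoid.lift (rels := ITRel n)
    (Sum.elim (fun i ↦ J.perm (sPerm i)) fun i ↦ J.join (lo i) (hi i)) (by
    rintro _ _ (i | ⟨i, j, h⟩ | ⟨i, j, h⟩ | i | ⟨i, j, -⟩ | i | i | ⟨i, j, h⟩ | ⟨i, j, h⟩ |
      ⟨i, j, h⟩) <;>
    simp only [fσ, fτ, map_mul, map_one, FreeMonoid.lift_eval_of, Sum.elim_inl, Sum.elim_inr]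
    · rw [← map_mul, sPerm_mul_self, map_one]
    · rw [← map_mul, sPerm_comm h, map_mul]
    · rw [← map_mul, ← map_mul, sPerm_braid h, map_mul, map_mul]
    · exact J.join_idem _ _
    · exact J.join_commute _ _ _ _
    · exact J.join_mul_swap _ _
    · exact J.swap_mul_join _ _
    · exact J.commute_join_sPerm h
    · exact J.sPerm_mul_join_mul_sPerm h
    · exact J.join_mul_sPerm_mul_join h)

namespace ITMonoid

variable {n : ℕ}

theorem lift_σI {M : Type*} [Monoid M] (J : JoinSystem (Fin n) M) (i : Fin (n - 1)) :
    lift J (σI i) = J.perm (sPerm i) := rfl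

theorem lift_τI {M : Type*} [Monoid M] (J : JoinSystem (Fin n) M) (i : Fin (n - 1)) :
    lift J (τI i) = J.join (lo i) (hi i) := rfl

theorem leftInverse_lift_joinSystem :
    Function.LeftInverse (joinSystem n).lift (lift (UniformBlockPerm.joinSystem (Fin n))) := by
  suffices (joinSystem n).lift.comp (lift (UniformBlockPerm.joinSystem (Fin n))) =
      MonoidHom.id (ITMonoid n) from DFunLike.congr_fun this
  apply PresentedMonoid.ext
  rintro (i | i)
  · exact ((joinSystem n).lift_perm (sPerm i)).trans (permHom_sPerm i)
  · exact ((joinSystem n).lift_join (lo i) (hi i)).trans (join_lo_hi i)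

theorem perm_mem_mrange_lift {M : Type*} [Monoid M] (J : JoinSystem (Fin n) M)
    (g : Equiv.Perm (Fin n)) : J.perm g ∈ MonoidHom.mrange (lift J) := by
  have hle : Submonoid.closure (Set.range sPerm) ≤ (MonoidHom.mrange (lift J)).comap J.perm :=
    Submonoid.closure_le.2 (by rintro _ ⟨i, rfl⟩; exact ⟨σI i, lift_σI J i⟩)
  exact hle (closure_range_sPerm ▸ Submonoid.mem_top g)

theorem join_mem_mrange_lift {M : Type*} [Monoid M] (J : JoinSystem (Fin n) M)
    (a b : Fin n) : J.join a b ∈ MonoidHom.mrange (lift J) := by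
  obtain rfl | hab := eq_or_ne a b
  · rw [J.join_self]
    exact one_mem _
  obtain ⟨g, hg⟩ := exists_perm_apply_eq_getElem (l := [a, b]) (by simpa using hab)
  have hn : 0 < n - 1 := by omega
  have hconj := J.perm_mul_join g (lo ⟨0, hn⟩) (hi ⟨0, hn⟩)
  have hlo : g (lo ⟨0, hn⟩) = a := hg 0 (by simp) _
  have hhi : g (hi ⟨0, hn⟩) = b := hg 1 (by simp) _
  rw [hlo, hhi] at hconj
  have hjoin : J.join a b = J.perm g * J.join (lo ⟨0, hn⟩) (hi ⟨0, hn⟩) * J.perm g⁻¹ := by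
    rw [hconj, mul_assoc, ← map_mul, mul_inv_cancel, map_one, mul_one]
  rw [hjoin]
  exact mul_mem (mul_mem (perm_mem_mrange_lift J g) ⟨τI ⟨0, hn⟩, lift_τI J _⟩)
    (perm_mem_mrange_lift J _)

/-- The isomorphism from `T` to `IT_n` sending `σ_i` to `s_i` and `τ_i` to `ϱ_i`. -/
noncomputable def equivUniformBlockPerm (n : ℕ) : ITMonoid n ≃* UniformBlockPerm (Fin n) :=
  MulEquiv.ofBijective (lift (UniformBlockPerm.joinSystem (Fin n)))
    ⟨leftInverse_lift_joinSystem.injective,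
      UniformBlockPerm.mem_of_perm_mem_of_join_mem
        (perm_mem_mrange_lift (UniformBlockPerm.joinSystem _))
        (join_mem_mrange_lift (UniformBlockPerm.joinSystem _))⟩

end ITMonoid

/-! ### Counting maps with prescribed fibres -/

section FiberCard

open Equiv

variable {α β ι κ : Type*}

/-- The sizes of the fibres of `f`, infinite fibres having size `0`. -/
noncomputable def fiberCard (f : α → ι) (i : ι) : ℕ := Nat.card {a // f a = i}

theorem fiberCard_comp_equiv (f : α → ι) (g : β ≃ α) : fiberCard (f ∘ g) = fiberCard f :=
  funext fun _ ↦ Nat.card_congr (g.subtypeEquiv fun _ ↦ Iff.rfl)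

theorem fiberCard_equiv_comp (e : ι ≃ κ) (f : α → ι) : fiberCard (e ∘ f) ∘ e = fiberCard f :=
  funext fun _ ↦ Nat.card_congr ((Equiv.refl α).subtypeEquiv fun _ ↦ e.apply_eq_iff_eq)

theorem exists_equiv_comp_eq_of_fiberCard_eq [Finite α] [Finite β] {f : α → ι} {f' : β → ι}
    (h : fiberCard f = fiberCard f') : ∃ g : α ≃ β, f' ∘ g = f := by
  have hequiv (i : ι) : Nonempty ({a // f a = i} ≃ {b // f' b = i}) :=
    Finite.card_eq.1 (congrFun h i)
  exact ⟨ofFiberEquiv fun i ↦ (hequiv i).some, funext fun a ↦ ofFiberEquiv_map _ a⟩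

theorem exists_equiv_comp_eq_of_ker_eq {f : α → ι} {f' : α → κ} (hf : f.Surjective)
    (hf' : f'.Surjective) (h : Setoid.ker f = Setoid.ker f') : ∃ e : ι ≃ κ, e ∘ f = f' := by
  have hker (a b : α) : f a = f b ↔ f' a = f' b := Setoid.ext_iff.1 h a b
  have hsection (a : α) : f' (Function.surjInv hf (f a)) = f' a :=
    (hker _ _).1 (Function.surjInv_eq hf _)
  refine ⟨ofBijective (f' ∘ Function.surjInv hf) ⟨fun i j hij ↦ ?_, fun k ↦ ?_⟩, funext hsection⟩
  · rw [← Function.surjInv_eq hf i, (hker _ _).2 hij, Function.surjInv_eq hf j]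
  · obtain ⟨a, rfl⟩ := hf' k
    exact ⟨f a, hsection a⟩

theorem surjective_of_fiberCard_pos {f : α → ι} (h : ∀ i, 0 < fiberCard f i) : f.Surjective :=
  fun i ↦ (Nat.card_pos_iff.1 (h i)).1.elim fun a ↦ ⟨a.1, a.2⟩

theorem fiberCard_pos_of_surjective [Finite α] {f : α → ι} (h : f.Surjective) (i : ι) :
    0 < fiberCard f i :=
  Nat.card_pos_iff.2 ⟨(h i).elim fun a ha ↦ ⟨⟨a, ha⟩⟩, inferInstance⟩

theorem sum_fiberCard [Finite α] [Fintype ι] (f : α → ι) : ∑ i, fiberCard f i = Nat.card α := by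
  rw [← Nat.card_congr (sigmaFiberEquiv f), Nat.card_sigma]
  rfl

theorem exists_fiberCard_eq [Finite α] [Fintype ι] {s : ι → ℕ} (hs : ∑ i, s i = Nat.card α) :
    ∃ f : α → ι, fiberCard f = s := by
  have hcard : Nat.card α = Nat.card (Σ i, Fin (s i)) := by
    rw [Nat.card_sigma, ← hs]
    simp only [Nat.card_fin]
  obtain ⟨e⟩ := Finite.card_eq.1 hcard
  refine ⟨Sigma.fst ∘ e, ?_⟩
  rw [fiberCard_comp_equiv]
  exact funext fun i ↦ (Nat.card_congr (sigmaSubtype i)).trans (Nat.card_fin _)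

theorem fiberCard_eq_count [Fintype α] [DecidableEq ι] (f : α → ι) (i : ι) :
    fiberCard f i = ((Finset.univ : Finset α).val.map f).count i := by
  rw [fiberCard, Multiset.count_map, Nat.card_eq_fintype_card, Fintype.card_subtype, Finset.card,
    Finset.filter_val]
  simp only [eq_comm]

theorem card_perm_comp_eq_self [Finite α] (f : α → ι) {t : Finset ι} (ht : ∀ a, f a ∈ t) :
    Nat.card {g : Perm α // f ∘ g = f} = ∏ i ∈ t, (fiberCard f i).factorial := by
  classical
  have := Fintype.ofFinite α
  simp only [fiberCard, Nat.card_eq_fintype_card]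
  rw [DomMulAct.stabilizer_card']
  refine Finset.prod_subset (Finset.image_subset_iff.2 fun a _ ↦ ht a) fun i _ hi ↦ ?_
  have : IsEmpty {a // f a = i} :=
    ⟨fun a ↦ hi (Finset.mem_image.2 ⟨a.1, Finset.mem_univ _, a.2⟩)⟩
  rw [Fintype.card_eq_zero, Nat.factorial_zero]

theorem card_perm_comp_eq_comp [Finite α] [Fintype ι] (f : α → ι) (g : Perm α) :
    Nat.card {g' : Perm α // f ∘ g' = f ∘ g} = ∏ i, (fiberCard f i).factorial := by
  rw [← card_perm_comp_eq_self f fun a ↦ Finset.mem_univ (f a)]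
  refine Nat.card_congr ((Equiv.mulRight g⁻¹).subtypeEquiv fun g' ↦ ?_)
  rw [coe_mulRight, Perm.coe_mul, ← Function.comp_assoc]
  exact (comp_symm_eq g f (f ∘ g')).symm

theorem card_range_mul_of_card_fiber {X Y : Type*} [Finite X] {F : X → Y} {k : ℕ}
    (h : ∀ x, Nat.card {x' // F x' = F x} = k) : Nat.card (Set.range F) * k = Nat.card X := by
  have := Fintype.ofFinite (Set.range F)
  have hfiber : ∀ y : Set.range F, Nat.card {x // Set.rangeFactorization F x = y} = k := by
    rintro ⟨_, x, rfl⟩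
    rw [← h x]
    exact Nat.card_congr ((Equiv.refl X).subtypeEquiv fun x' ↦ Subtype.ext_iff)
  rw [← Nat.card_congr (sigmaFiberEquiv (Set.rangeFactorization F)), Nat.card_sigma,
    Finset.sum_congr rfl fun y _ ↦ hfiber y]
  simp

theorem card_fiberCard_eq_mul [Finite α] [Fintype ι] {s : ι → ℕ} (hs : ∑ i, s i = Nat.card α) :
    Nat.card {f : α → ι // fiberCard f = s} * ∏ i, (s i).factorial = (Nat.card α).factorial := by
  obtain ⟨f, rfl⟩ := exists_fiberCard_eq hs
  have hrange : Set.range (fun g : Perm α ↦ f ∘ g) = {f' | fiberCard f' = fiberCard f} := by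
    ext f'
    refine ⟨?_, exists_equiv_comp_eq_of_fiberCard_eq⟩
    rintro ⟨g, rfl⟩
    exact fiberCard_comp_equiv f g
  rw [← Nat.card_perm, ← card_range_mul_of_card_fiber (card_perm_comp_eq_comp f), hrange]
  rfl

theorem card_ker_eq_of_fiberCard_eq {s : ι → ℕ} (hs : ∀ i, 0 < s i) {f : α → ι}
    (hf : fiberCard f = s) :
    Nat.card {f' : {f' : α → ι // fiberCard f' = s} // Setoid.ker f'.1 = Setoid.ker f} =
      Nat.card {e : Perm ι // s ∘ e = s} := by
  have surj {f' : α → ι} (hf' : fiberCard f' = s) : f'.Surjective :=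
    surjective_of_fiberCard_pos (hf' ▸ hs)
  have hcomp {e : Perm ι} (he : s ∘ e = s) : fiberCard (e ∘ f) = s :=
    e.surjective.injective_comp_right ((fiberCard_equiv_comp e f).trans (hf.trans he.symm))
  let permuteLabels : {e : Perm ι // s ∘ e = s} →
      {f' : {f' : α → ι // fiberCard f' = s} // Setoid.ker f'.1 = Setoid.ker f} :=
    fun e ↦ ⟨⟨e.1 ∘ f, hcomp e.2⟩, Setoid.ext fun a b ↦ e.1.apply_eq_iff_eq⟩
  refine (Nat.card_eq_of_bijective permuteLabels ⟨fun e e' h ↦ ?_, ?_⟩).symm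
  · have : e.1 ∘ f = e'.1 ∘ f := congrArg (·.1.1) h
    exact Subtype.ext (DFunLike.coe_injective ((surj hf).injective_comp_right this))
  · rintro ⟨⟨f', hf'⟩, hker⟩
    obtain ⟨e, rfl⟩ := exists_equiv_comp_eq_of_ker_eq (surj hf) (surj hf') hker.symm
    have he : s ∘ e = s := by simpa only [hf', hf] using fiberCard_equiv_comp e f
    exact ⟨⟨e, he⟩, rfl⟩

end FiberCard

/-! ### Counting uniform block permutations -/

section PartSize

variable {n : ℕ}

/-- The sizes of the parts of `p`, as a family indexed by the parts counted with multiplicity. -/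
def partSize (p : n.Partition) (i : p.parts.ToType) : ℕ := i.1

theorem map_partSize (p : n.Partition) :
    (Finset.univ : Finset p.parts.ToType).val.map (partSize p) = p.parts :=
  Multiset.map_univ_coe _

theorem partSize_mem_parts (p : n.Partition) (i : p.parts.ToType) : partSize p i ∈ p.parts :=
  Multiset.coe_mem

theorem partSize_pos (p : n.Partition) (i : p.parts.ToType) : 0 < partSize p i :=
  p.parts_pos (partSize_mem_parts p i)

theorem partSize_mem_Icc (p : n.Partition) (i : p.parts.ToType) :
    partSize p i ∈ Finset.Icc 1 n :=
  Finset.mem_Icc.2 ⟨partSize_pos p i, Nat.Partition.le_of_mem_parts (partSize_mem_parts p i)⟩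

theorem sum_partSize (p : n.Partition) : ∑ i, partSize p i = n := by
  rw [Finset.sum_eq_multiset_sum, map_partSize, p.parts_sum]

theorem fiberCard_partSize (p : n.Partition) (v : ℕ) :
    fiberCard (partSize p) v = p.parts.count v := by
  rw [fiberCard_eq_count, map_partSize]

theorem prod_factorial_partSize (p : n.Partition) :
    ∏ i, (partSize p i).factorial = ∏ v ∈ Finset.Icc 1 n, v.factorial ^ p.parts.count v := by
  rw [← Finset.prod_fiberwise_of_maps_to' (fun i _ ↦ partSize_mem_Icc p i)]
  refine Finset.prod_congr rfl fun v _ ↦ ?_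
  rw [Finset.prod_const, ← fiberCard_partSize, fiberCard, Nat.card_eq_fintype_card,
    Fintype.card_subtype]

theorem card_perm_partSize_comp_eq (p : n.Partition) :
    Nat.card {e : Equiv.Perm p.parts.ToType // partSize p ∘ e = partSize p} =
      ∏ v ∈ Finset.Icc 1 n, (p.parts.count v).factorial := by
  simp only [card_perm_comp_eq_self _ (partSize_mem_Icc p), fiberCard_partSize]

theorem eq_of_partSize_comp_equiv {p q : n.Partition} (e : p.parts.ToType ≃ q.parts.ToType)
    (h : partSize q ∘ e = partSize p) : p = q := by
  apply Nat.Partition.ext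
  rw [← map_partSize p, ← map_partSize q, ← h, ← Multiset.map_map, Multiset.map_univ_val_equiv]

theorem exists_partSize_comp_equiv_eq {ι : Type*} [Fintype ι] {s : ι → ℕ}
    (hpos : ∀ i, 0 < s i) (hsum : ∑ i, s i = n) :
    ∃ (p : n.Partition) (e : ι ≃ p.parts.ToType), partSize p ∘ e = s := by
  let p : n.Partition :=
    { parts := Finset.univ.val.map s
      parts_pos := fun h ↦ by
        obtain ⟨i, _, rfl⟩ := Multiset.mem_map.1 h
        exact hpos i
      parts_sum := hsum }
  refine ⟨p, exists_equiv_comp_eq_of_fiberCard_eq (funext fun v ↦ ?_)⟩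
  rw [fiberCard_partSize, fiberCard_eq_count]

end PartSize

namespace UniformBlockPerm

open Equiv

variable {α ι : Type*}

/-- The uniform block permutation whose equivalence relation is the kernel of a labelling of `α`
with `s i` elements labelled `i`. -/
def ofLabelling (s : ι → ℕ) (x : {f : α → ι // fiberCard f = s} × Perm α) : UniformBlockPerm α :=
  mk (Setoid.ker x.1.1) x.2

theorem ofLabelling_eq_iff {s : ι → ℕ} {x y : {f : α → ι // fiberCard f = s} × Perm α} :
    ofLabelling s x = ofLabelling s y ↔
      Setoid.ker x.1.1 = Setoid.ker y.1.1 ∧ y.1.1 ∘ x.2 = y.1.1 ∘ y.2 := by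
  refine mk_eq_mk_iff.trans (and_congr_right fun hker ↦ ?_)
  rw [hker, funext_iff]
  rfl

theorem card_ofLabelling_fiber [Finite α] [Fintype ι] {s : ι → ℕ} (hs : ∀ i, 0 < s i)
    (x : {f : α → ι // fiberCard f = s} × Perm α) :
    Nat.card {y // ofLabelling s y = ofLabelling s x} =
      Nat.card {e : Perm ι // s ∘ e = s} * ∏ i, (s i).factorial := by
  obtain ⟨⟨f, hf⟩, g⟩ := x
  have hperm := card_perm_comp_eq_comp f g
  rw [hf] at hperm
  rw [← card_ker_eq_of_fiberCard_eq hs hf, ← hperm, ← Nat.card_prod]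
  exact Nat.card_congr ((subtypeEquivRight fun _ ↦ ofLabelling_eq_iff).trans
    (subtypeProdEquivProd (p := fun f' : {f' : α → ι // fiberCard f' = s} ↦
      Setoid.ker f'.1 = Setoid.ker f) (q := fun g' : Perm α ↦ f ∘ g' = f ∘ g)))

theorem card_range_ofLabelling_mul [Finite α] [Fintype ι] {s : ι → ℕ} (hpos : ∀ i, 0 < s i)
    (hsum : ∑ i, s i = Nat.card α) :
    Nat.card (Set.range (ofLabelling (α := α) s)) *
        (Nat.card {e : Perm ι // s ∘ e = s} * (∏ i, (s i).factorial) ^ 2) =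
      (Nat.card α).factorial ^ 2 := by
  have hfiber := card_range_mul_of_card_fiber (card_ofLabelling_fiber (α := α) hpos)
  rw [Nat.card_prod, Nat.card_perm] at hfiber
  rw [sq, ← mul_assoc _ (∏ i, _), ← mul_assoc, hfiber, mul_right_comm,
    card_fiberCard_eq_mul hsum, sq]

variable {n : ℕ}

theorem eq_of_ofLabelling_eq {p q : n.Partition} {x y}
    (h : ofLabelling (α := α) (partSize p) x = ofLabelling (partSize q) y) : p = q := by
  obtain ⟨⟨f, hf⟩, g⟩ := x
  obtain ⟨⟨f', hf'⟩, g'⟩ := y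
  have surj {r : n.Partition} {f : α → r.parts.ToType} (hf : fiberCard f = partSize r) :
      f.Surjective := surjective_of_fiberCard_pos (hf ▸ partSize_pos r)
  obtain ⟨e, rfl⟩ := exists_equiv_comp_eq_of_ker_eq (surj hf) (surj hf') (mk_eq_mk_iff.1 h).1
  exact eq_of_partSize_comp_equiv e (by rw [← hf', fiberCard_equiv_comp, hf])

theorem exists_mem_range_ofLabelling [Finite α] (hα : Nat.card α = n) (x : UniformBlockPerm α) :
    ∃ p : n.Partition, x ∈ Set.range (ofLabelling (partSize p)) := by
  induction x using ind with | h R g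
  have := Fintype.ofFinite (Quotient R)
  obtain ⟨p, e, he⟩ := exists_partSize_comp_equiv_eq
    (fiberCard_pos_of_surjective (Quotient.mk_surjective (s := R)))
    ((sum_fiberCard _).trans hα)
  have hlabel : fiberCard (e ∘ Quotient.mk R) = partSize p :=
    e.surjective.injective_comp_right ((fiberCard_equiv_comp e _).trans he.symm)
  have hker : Setoid.ker (e ∘ Quotient.mk R) = R :=
    Setoid.ext fun a b ↦ e.apply_eq_iff_eq.trans Quotient.eq
  exact ⟨p, (⟨_, hlabel⟩, g), congrArg (mk · g) hker⟩

theorem card_range_ofLabelling_partSize [Finite α] (hα : Nat.card α = n) (p : n.Partition) :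
    Nat.card (Set.range (ofLabelling (α := α) (partSize p))) =
      n.factorial ^ 2 / ∏ i ∈ Finset.Icc 1 n,
        ((p.parts.count i).factorial * i.factorial ^ (2 * p.parts.count i)) := by
  refine (Nat.div_eq_of_eq_mul_left (Finset.prod_pos fun i _ ↦ by positivity) ?_).symm
  have hcard := card_range_ofLabelling_mul (partSize_pos p) ((sum_partSize p).trans hα.symm)
  rw [card_perm_partSize_comp_eq, prod_factorial_partSize, hα] at hcard
  simp only [Finset.prod_mul_distrib, pow_mul', Finset.prod_pow, hcard]

theorem card_eq_sum_partition [Finite α] (hα : Nat.card α = n) :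
    Nat.card (UniformBlockPerm α) =
      ∑ p : n.Partition, n.factorial ^ 2 / ∏ i ∈ Finset.Icc 1 n,
        ((p.parts.count i).factorial * i.factorial ^ (2 * p.parts.count i)) := by
  have hunique (x : UniformBlockPerm α) :
      ∃! p : n.Partition, x ∈ Set.range (ofLabelling (partSize p)) := by
    obtain ⟨p, hp⟩ := exists_mem_range_ofLabelling hα x
    refine ⟨p, hp, ?_⟩
    obtain ⟨y, rfl⟩ := hp
    rintro q ⟨z, hz⟩
    exact eq_of_ofLabelling_eq hz
  rw [← Nat.card_congr (Set.sigmaEquiv _ hunique), Nat.card_sigma]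
  exact Finset.sum_congr rfl fun p _ ↦ card_range_ofLabelling_partSize hα p

end UniformBlockPerm

/-- Theorem 2 of Kudryavtseva–Mazorchuk, in cardinality form: the monoid `T` is finite and
`|T| = Σ_{λ ⊢ n} (n!)² / Π_{i=1}^n (λ^{(i)}! (i!)^{2 λ^{(i)}})`, the cardinality of `IT_n`
(to which `T` is isomorphic via `σ_i ↦ s_i`, `τ_i ↦ ϱ_i`), where `λ^{(i)}` is the number
of parts of the partition `λ` equal to `i`. -/
theorem IT_card_eq (n : ℕ) (hn : 1 ≤ n) :
    Finite (ITMonoid n) ∧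
      Nat.card (ITMonoid n) =
        ∑ p : Nat.Partition n,
          n.factorial ^ 2 /
            ∏ i ∈ Finset.Icc 1 n,
              ((p.parts.count i).factorial * i.factorial ^ (2 * p.parts.count i)) := by
  let e := (ITMonoid.equivUniformBlockPerm n).toEquiv
  refine ⟨Finite.of_equiv _ e.symm, ?_⟩
  rw [Nat.card_congr e, UniformBlockPerm.card_eq_sum_partition (Nat.card_fin n)]
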